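/- Let r ≥ 1 and let i, j, k, l, m be integers with 1 ≤ j ≤ i ≤ r, 0 ≤ l ≤ r-1, m ≥ 0, 1 ≤ k ≤ mr+l, and k + i ≥ r + j. Then in ℚ(x_1,…,x_r) one has X(i,k) · X(j, mr+l) = X(i, (m+1)r+l+j-i) · X(j, k+i-r-j) + X(i, r+j-i-1) · X(k+i+1, (m+1)r+l+j-k-i-1). -/

import Mathlib

/-- The ambient field `ℚ(x_1, …, x_r)`, realized as the fraction field of the
polynomial ring over `ℚ` in variables indexed by `ZMod r` (so indices are
automatically read modulo `r`). -/
noncomputable abbrev CyclicField (r : ℕ) : Type :=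
  FractionRing (MvPolynomial (ZMod r) ℚ)

/-- The variable `x_i` for `i : ℤ`, with `x_{i+r} = x_i`. -/
noncomputable def xv (r : ℕ) (i : ℤ) : CyclicField r :=
  algebraMap (MvPolynomial (ZMod r) ℚ) (CyclicField r) (MvPolynomial.X (i : ZMod r))

/-- The generalized cluster variable `X(l, n)` (the image of the indecomposable
nilpotent representation `E_l[n]` under the Caldero–Chapoton map):
`X(l,0) = 1` and, for `n ≥ 1`,
`X(l,n) = x_{l+n}/x_l + Σ_{k=1}^{n-1} (x_{l+n}·x_{l+r-1})/(x_{l+k-1}·x_{l+k}) + x_{l+r-1}/x_{l+n-1}`. -/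
noncomputable def Xgcv (r : ℕ) (l : ℤ) : ℕ → CyclicField r
  | 0 => 1
  | n + 1 =>
      xv r (l + n + 1) / xv r l
        + ∑ k ∈ Finset.Icc 1 n,
            (xv r (l + n + 1) * xv r (l + r - 1)) / (xv r (l + k - 1) * xv r (l + k))
        + xv r (l + r - 1) / xv r (l + n)

/-!
Think of `x t` as Penner's lambda length of the arc from the puncture of a punctured disc to the
`t`-th marked point, all boundary segments having lambda length `1`. The horocycle at the puncture
then has length `1 / (x t * x (t + 1))` inside the `t`-th triangle, so the arc from the `a`-th to
the `b`-th marked point has lambda length `x a * x b * (h b - h a)`, where `h` is the accumulated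
horocyclic length. The variable `X(l, n)` is the lambda length of the arc from `l - 1` to `l + n`,
and the multiplication formula is the Ptolemy relation for the marked points
`i - 1 < r + j - 1 < i + k < r + j + n` on the universal cover, where `n = m r + l`; the factors `x`
cancel from it and what remains is `(u + v) (v + w) = (u + v + w) v + u w`.
-/

section LambdaLength

variable {K : Type*} [Semifield K] (x : ℤ → K)

/-- The length of the horocycle at the puncture between the arcs to the marked points `a` and
`a + n`, where `x t` is the lambda length of the arc from the puncture to the marked point `t`. -/
def horocyclicLength (a : ℤ) (n : ℕ) : K :=
  ∑ t ∈ Finset.range n, 1 / (x (a + t) * x (a + t + 1))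

/-- The lambda length of the arc joining the marked points `a` and `a + n`, where `x t` is the
lambda length of the arc from the puncture to the marked point `t`. Marked points live on the
universal cover, so the arc may wind around the puncture. -/
def lambdaLength (a : ℤ) (n : ℕ) : K :=
  x a * x (a + n) * horocyclicLength x a n

theorem horocyclicLength_add (a : ℤ) (m n : ℕ) :
    horocyclicLength x a (m + n) = horocyclicLength x a m + horocyclicLength x (a + m) n := by
  simp only [horocyclicLength, Finset.sum_range_add, Nat.cast_add, add_assoc]

theorem horocyclicLength_add_two (a : ℤ) (n : ℕ) :
    horocyclicLength x a (n + 2) =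
      1 / (x a * x (a + 1))
        + ∑ k ∈ Finset.Icc 1 n, 1 / (x (a + k) * x (a + k + 1))
        + 1 / (x (a + n + 1) * x (a + n + 2)) := by
  rw [horocyclicLength, Finset.sum_range_succ, Finset.range_eq_Ico,
    Finset.sum_eq_sum_Ico_succ_bot n.succ_pos, n.succ_eq_add_one, zero_add,
    Finset.Ico_add_one_right_eq_Icc]
  simp [add_assoc, one_add_one_eq_two]

theorem lambdaLength_ptolemy (a : ℤ) (p q s : ℕ) :
    lambdaLength x a (p + q) * lambdaLength x (a + p) (q + s) =
      lambdaLength x a (p + q + s) * lambdaLength x (a + p) q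
        + lambdaLength x a p * lambdaLength x (a + p + q) s := by
  simp only [lambdaLength, horocyclicLength_add, Nat.cast_add, ← add_assoc]
  ring

variable {x}

theorem lambdaLength_one {a : ℤ} (ha : x a ≠ 0) (hb : x (a + 1) ≠ 0) :
    lambdaLength x a 1 = 1 := by
  simpa [lambdaLength, horocyclicLength] using mul_inv_cancel₀ (mul_ne_zero ha hb)

theorem lambdaLength_add_two {a : ℤ} {n : ℕ} (ha : x a ≠ 0) (hb : x (a + n + 2) ≠ 0) :
    lambdaLength x a (n + 2) =
      x (a + n + 2) / x (a + 1)
        + ∑ k ∈ Finset.Icc 1 n, x (a + n + 2) * x a / (x (a + k) * x (a + k + 1))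
        + x a / x (a + n + 1) := by
  have first : x a * x (a + n + 2) * (1 / (x a * x (a + 1))) = x (a + n + 2) / x (a + 1) := by
    field_simp
  have last : x a * x (a + n + 2) * (1 / (x (a + n + 1) * x (a + n + 2))) =
      x a / x (a + n + 1) := by
    field_simp
  rw [lambdaLength, Nat.cast_add, Nat.cast_ofNat, ← add_assoc, horocyclicLength_add_two, mul_add,
    mul_add, first, last, Finset.mul_sum]
  simp only [mul_one_div, mul_comm (x a)]

theorem lambdaLength_periodic {c : ℤ} (hx : Function.Periodic x c) :
    Function.Periodic (lambdaLength x) c := by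
  intro a
  funext n
  simp only [lambdaLength, horocyclicLength, add_right_comm a c, add_right_comm _ c, hx _]

end LambdaLength

theorem xv_ne_zero (r : ℕ) (i : ℤ) : xv r i ≠ 0 := by
  simp [xv]

theorem xv_periodic (r : ℕ) : Function.Periodic (xv r) r := by
  intro i
  simp [xv]

theorem Xgcv_eq_lambdaLength (r : ℕ) (l : ℤ) (n : ℕ) :
    Xgcv r l n = lambdaLength (xv r) (l - 1) (n + 1) := by
  cases n with
  | zero => rw [Xgcv, lambdaLength_one (xv_ne_zero r _) (xv_ne_zero r _)]
  | succ n =>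
    have period : xv r (l + r - 1) = xv r (l - 1) := by
      rw [add_sub_right_comm, xv_periodic r]
    have add_two_sub_one (t : ℤ) : t + 2 - 1 = t + 1 := by ring
    rw [Xgcv, period, lambdaLength_add_two (xv_ne_zero r _) (xv_ne_zero r _), sub_add_cancel]
    simp only [sub_add_eq_add_sub, add_sub_cancel_right, add_two_sub_one]

theorem Xgcv_periodic (r : ℕ) : Function.Periodic (Xgcv r) r := by
  intro l
  funext n
  rw [Xgcv_eq_lambdaLength, Xgcv_eq_lambdaLength, add_sub_right_comm,
    lambdaLength_periodic (xv_periodic r)]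

theorem Xgcv_ptolemy (r : ℕ) (a : ℤ) (p q s : ℕ) :
    Xgcv r a (p + q + 1) * Xgcv r (a + p + 1) (q + s + 1) =
      Xgcv r a (p + q + s + 2) * Xgcv r (a + p + 1) q
        + Xgcv r a p * Xgcv r (a + p + q + 2) s := by
  have h := lambdaLength_ptolemy (xv r) (a - 1) (p + 1) (q + 1) (s + 1)
  rw [show a - 1 + (p + 1 : ℕ) + (q + 1 : ℕ) = a + p + q + 2 - 1 by omega,
    show a - 1 + (p + 1 : ℕ) = a + p + 1 - 1 by omega,
    show p + 1 + (q + 1) + (s + 1) = p + q + s + 2 + 1 by omega,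
    show p + 1 + (q + 1) = p + q + 1 + 1 by omega,
    show q + 1 + (s + 1) = q + s + 1 + 1 by omega] at h
  simpa only [Xgcv_eq_lambdaLength] using h

theorem stmt3_general (r : ℕ) (i j k n : ℤ)
    (hij : i < r + j) (hjk : r + j ≤ k + i) (hkn : k + i < n + r + j) :
    Xgcv r i k.toNat * Xgcv r j n.toNat =
      Xgcv r i (n + r + j - i).toNat * Xgcv r j (k + i - r - j).toNat
        + Xgcv r i ((r : ℤ) + j - i - 1).toNat
            * Xgcv r (k + i + 1) (n + r + j - k - i - 1).toNat := by
  obtain ⟨p, hp⟩ : ∃ p : ℕ, r + j - i - 1 = (p : ℤ) := Int.eq_ofNat_of_zero_le (by omega)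
  obtain ⟨q, hq⟩ : ∃ q : ℕ, k + i - r - j = (q : ℤ) := Int.eq_ofNat_of_zero_le (by omega)
  obtain ⟨s, hs⟩ : ∃ s : ℕ, n + r + j - k - i - 1 = (s : ℤ) := Int.eq_ofNat_of_zero_le (by omega)
  have h := Xgcv_ptolemy r i p q s
  rw [show i + p + 1 = j + r by omega, Xgcv_periodic r j] at h
  rw [hp, hq, hs, show n + r + j - i = (p + q + s + 2 : ℕ) by omega,
    show k + i + 1 = i + p + q + 2 by omega, show k = (p + q + 1 : ℕ) by omega,
    show n = (q + s + 1 : ℕ) by omega]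
  simpa only [Int.toNat_natCast] using h

/-- inductive multiplication formula, case `j ≤ i`, `k + i ≥ r + j`. -/
theorem stmt3 (r : ℕ) (hr : 1 ≤ r) (i j k l m : ℤ)
    (hj : 1 ≤ j) (hji : j ≤ i) (hi : i ≤ r)
    (hl0 : 0 ≤ l) (hl : l ≤ (r : ℤ) - 1) (hm : 0 ≤ m)
    (hk1 : 1 ≤ k) (hk2 : k ≤ m * r + l) (hki : k + i ≥ r + j) :
    Xgcv r i k.toNat * Xgcv r j (m * r + l).toNat =
      Xgcv r i ((m + 1) * r + l + j - i).toNat * Xgcv r j (k + i - r - j).toNat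
        + Xgcv r i ((r : ℤ) + j - i - 1).toNat
            * Xgcv r (k + i + 1) ((m + 1) * r + l + j - k - i - 1).toNat := by
  rw [show (m + 1) * r + l + j = m * r + l + r + j by ring]
  exact stmt3_general r i j k (m * r + l) (by omega) hki (by omega)
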